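/- arXiv:1408.0529 — 2 statements merged into one kernel-verified Lean document; each statement's English description precedes it below -/
import Mathlib

section
/- Let π be an irreducible pair on a finite alphabet A. If Z(π) ⊆ Alt(A), then G(π) ⊆ Alt(A). -/
open Equiv

/-- A (labeled) pair on alphabet `A`: two bijections from `A` to positions.
Positions are `Fin (Fintype.card A)`, 0-indexed: position `j : Fin N`
corresponds to the position `j+1 ∈ {1,…,N}` of the paper. -/
abbrev RPair (A : Type*) [Fintype A] := Bool → (A ≃ Fin (Fintype.card A))

variable {A : Type*} [Fintype A]

/-- Irreducibility: `π₁(π₀⁻¹({1,…,k})) = {1,…,k}` only for `k = N`. -/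
def PairIrreducible (π : RPair A) : Prop :=
  ∀ k : Fin (Fintype.card A),
    (∀ x : A, π false x ≤ k → π true x ≤ k) → (k : ℕ) + 1 = Fintype.card A

/-- Type-ε right Rauzy induction sends `π` to `π'`.  Here `zc = π_ε⁻¹(N)` and
`zo = π_{1-ε}⁻¹(N)` are characterized as the letters of maximal position. -/
def RightMove (π π' : RPair A) : Prop :=
  ∃ ε : Bool, ∃ zc zo : A,
    (∀ x : A, π ε x ≤ π ε zc) ∧
    (∀ x : A, π (!ε) x ≤ π (!ε) zo) ∧
    π' ε = π ε ∧
    (∀ b : A, π (!ε) b ≤ π (!ε) zc → π' (!ε) b = π (!ε) b) ∧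
    ((π' (!ε) zo : ℕ) = (π (!ε) zc : ℕ) + 1) ∧
    (∀ b : A, ¬ π (!ε) b ≤ π (!ε) zc → b ≠ zo → (π' (!ε) b : ℕ) = (π (!ε) b : ℕ) + 1)

/-- Type-ε left Rauzy induction sends `π` to `π'`.  Here `ac = π_ε⁻¹(1)` and
`ao = π_{1-ε}⁻¹(1)` are characterized as the letters of minimal position. -/
def LeftMove (π π' : RPair A) : Prop :=
  ∃ ε : Bool, ∃ ac ao : A,
    (∀ x : A, π ε ac ≤ π ε x) ∧
    (∀ x : A, π (!ε) ao ≤ π (!ε) x) ∧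
    π' ε = π ε ∧
    (∀ b : A, π (!ε) ac ≤ π (!ε) b → π' (!ε) b = π (!ε) b) ∧
    ((π' (!ε) ao : ℕ) = (π (!ε) ac : ℕ) - 1) ∧
    (∀ b : A, ¬ π (!ε) ac ≤ π (!ε) b → b ≠ ao → (π' (!ε) b : ℕ) = (π (!ε) b : ℕ) - 1)

/-- The Rauzy class `R(π)`: pairs reachable by right Rauzy inductions. -/
def RClass (π : RPair A) : Set (RPair A) := {ρ | Relation.ReflTransGen RightMove π ρ}

/-- The extended Rauzy class `E(π)`: pairs reachable by left and right Rauzy inductions. -/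
def EClass (π : RPair A) : Set (RPair A) :=
  {ρ | Relation.ReflTransGen (fun x y => RightMove x y ∨ LeftMove x y) π ρ}

/-- `π ∘ ν = (π₀ ∘ ν, π₁ ∘ ν)`. -/
def pairRename (π : RPair A) (ν : Equiv.Perm A) : RPair A := fun ε => ν.trans (π ε)

/-- The renaming set `G(π) = {ν : π ∘ ν ∈ E(π)}`. -/
def renamings (π : RPair A) : Set (Equiv.Perm A) := {ν | pairRename π ν ∈ EClass π}

/-- The non-labeled permutation `π₁ ∘ π₀⁻¹`. -/
def nonlabeled (π : RPair A) : Equiv.Perm (Fin (Fintype.card A)) :=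
  (π false).symm.trans (π true)

/-- The position `1` (smallest). -/
def posFirst (A : Type*) [Fintype A] [Nonempty A] : Fin (Fintype.card A) :=
  ⟨0, Fintype.card_pos⟩

/-- The position `N` (largest). -/
def posLast (A : Type*) [Fintype A] [Nonempty A] : Fin (Fintype.card A) :=
  ⟨Fintype.card A - 1, Nat.sub_lt Fintype.card_pos Nat.one_pos⟩

/-- A pair is standard if `π₀(π₁⁻¹(1)) = π₁(π₀⁻¹(1)) = N`. -/
def PairStandard [Nonempty A] (π : RPair A) : Prop :=
  π false ((π true).symm (posFirst A)) = posLast A ∧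
  π true ((π false).symm (posFirst A)) = posLast A

/-- `S` is the permutation `S(π)` of the paper. -/
def IsS [Nonempty A] (π : RPair A) (S : Equiv.Perm A) : Prop :=
  ∀ b : A,
    (π true b = posFirst A → S b = (π false).symm (posFirst A)) ∧
    (π true b ≠ posFirst A →
      (((π true b : ℕ) = (π true ((π false).symm (posLast A)) : ℕ) + 1 →
        (π false (S b) : ℕ) = (π false ((π true).symm (posLast A)) : ℕ) + 1) ∧
      ((π true b : ℕ) ≠ (π true ((π false).symm (posLast A)) : ℕ) + 1 →
        (π false (S b) : ℕ) =
          (π false ((π true).symm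
            ⟨(π true b : ℕ) - 1,
              Nat.lt_of_le_of_lt (Nat.sub_le _ _) (π true b).isLt⟩) : ℕ) + 1)))

/-- The marked letter `X(π) = π₀⁻¹(1)`. -/
def XOf [Nonempty A] (π : RPair A) : A := (π false).symm (posFirst A)

/-- `Q` is the permutation `Q(π)` of the paper (constructed from `S = S(π)`). -/
def IsQ [Nonempty A] (π : RPair A) (S Q : Equiv.Perm A) : Prop :=
  Q (XOf π) = XOf π ∧
  ∀ b : A, b ≠ XOf π →
    (S b = XOf π → Q b = S (S b)) ∧ (S b ≠ XOf π → Q b = S b)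

/-- `Λ`: the multiset of cardinalities of the orbits of `Q` on `A ∖ {X}`
(for `Q` fixing `X`): the nontrivial cycle lengths of `Q` together with one `1`
for each fixed point of `Q` other than `X`. -/
def lamOf [DecidableEq A] (Q : Equiv.Perm A) : Multiset ℕ :=
  Q.cycleType + Multiset.replicate ((Finset.univ.filter fun a => Q a = a).card - 1) 1

/-- The centralizer `Z(π)` of `(X(π), Q(π))`. -/
def ZOf [Nonempty A] (π : RPair A) (Q : Equiv.Perm A) : Set (Equiv.Perm A) :=
  {ν | ν (XOf π) = XOf π ∧ ν⁻¹ * Q * ν = Q}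

/-- Relational form of `S`, for arbitrary position maps. -/
def TRel {n : ℕ} (p q : A ≃ Fin n) (S : Equiv.Perm A) : Prop :=
  (∀ a b : A, (p a : ℕ) = 0 → (q b : ℕ) = 0 → S b = a) ∧
  (∀ c b d : A, (q b : ℕ) = q c + 1 → (p d : ℕ) = p c + 1 → S b = d) ∧
  (∀ z w b d : A, (p z : ℕ) + 1 = n → (q w : ℕ) + 1 = n →
    (q b : ℕ) = q z + 1 → (p d : ℕ) = p w + 1 → S b = d)

theorem TRel.flip {n : ℕ} {p q : A ≃ Fin n} {S : Equiv.Perm A} (h : TRel p q S) :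
    TRel q p S⁻¹ := by
  obtain ⟨h1, h2, h3⟩ := h
  refine ⟨fun a b ha hb => ?_, fun c b d hb hd => ?_, fun z w b d hz hw hb hd => ?_⟩
  · rw [Equiv.Perm.inv_eq_iff_eq]; exact (h1 _ _ hb ha).symm
  · rw [Equiv.Perm.inv_eq_iff_eq]; exact (h2 _ _ _ hd hb).symm
  · rw [Equiv.Perm.inv_eq_iff_eq]; exact (h3 _ _ _ _ hw hz hd hb).symm

theorem pos_inj {n : ℕ} (p : A ≃ Fin n) {a b : A} (h : (p a : ℕ) = p b) : a = b :=
  p.injective (Fin.ext h)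

theorem TRel.unique {n : ℕ} {p q : A ≃ Fin n} {S S' : Equiv.Perm A} (h : TRel p q S)
    (h' : TRel p q S') : S = S' := by
  obtain ⟨h1, h2, h3⟩ := h
  obtain ⟨h1', h2', h3'⟩ := h'
  ext b
  have hb := (q b).isLt
  by_cases hb0 : (q b : ℕ) = 0
  · have e : (p (p.symm ⟨0, by omega⟩) : ℕ) = 0 := by simp
    rw [h1 _ _ e hb0, h1' _ _ e hb0]
  · have ec : (q b : ℕ) = q (q.symm ⟨q b - 1, by omega⟩) + 1 := by simp; omega
    generalize q.symm ⟨q b - 1, by omega⟩ = c at ec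
    have hc := (p c).isLt
    by_cases hl : (p c : ℕ) + 1 = n
    · have ew : (q (q.symm ⟨n - 1, by omega⟩) : ℕ) + 1 = n := by simp; omega
      generalize q.symm ⟨n - 1, by omega⟩ = w at ew
      have hw := (p w).isLt
      have hwc : w ≠ c := by rintro rfl; omega
      have hne : (p w : ℕ) ≠ p c := fun h => hwc (pos_inj p h)
      have ed : (p (p.symm ⟨p w + 1, by omega⟩) : ℕ) = p w + 1 := by simp
      rw [h3 _ _ _ _ hl ew ec ed, h3' _ _ _ _ hl ew ec ed]
    · have ed : (p (p.symm ⟨p c + 1, by omega⟩) : ℕ) = p c + 1 := by simp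
      rw [h2 _ _ _ ec ed, h2' _ _ _ ec ed]

theorem TRel.right {n : ℕ} {p q q' : A ≃ Fin n} {S : Equiv.Perm A} (h : TRel p q S)
    (zc zo : A) (hzc : ∀ x, p x ≤ p zc) (hzo : ∀ x, q x ≤ q zo)
    (m1 : ∀ b : A, q b ≤ q zc → q' b = q b)
    (m2 : (q' zo : ℕ) = (q zc : ℕ) + 1)
    (m3 : ∀ b : A, ¬ q b ≤ q zc → b ≠ zo → (q' b : ℕ) = (q b : ℕ) + 1) :
    TRel p q' S := by
  obtain ⟨h1, h2, h3⟩ := h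
  have hn : 0 < n := (Nat.zero_le _).trans_lt (p zc).isLt
  have ezc : (p zc : ℕ) + 1 = n := by
    have := hzc (p.symm ⟨n - 1, by omega⟩)
    simp [Fin.le_def] at this; omega
  have ezo : (q zo : ℕ) + 1 = n := by
    have := hzo (q.symm ⟨n - 1, by omega⟩)
    simp [Fin.le_def] at this; omega
  have lt : (q zc : ℕ) < q zo := by omega
  have key : ∀ b : A, ((q b : ℕ) ≤ q zc ∧ (q' b : ℕ) = q b) ∨ (b = zo ∧ (q' b : ℕ) = q zc + 1) ∨
      (b ≠ zo ∧ (q zc : ℕ) < q b ∧ (q' b : ℕ) = q b + 1) := by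
    intro b
    by_cases hb : q b ≤ q zc
    · exact Or.inl ⟨hb, by rw [m1 b hb]⟩
    · by_cases hz : b = zo
      · subst hz; exact Or.inr (Or.inl ⟨rfl, m2⟩)
      · exact Or.inr (Or.inr ⟨hz, not_le.mp hb, m3 b hb hz⟩)
  refine ⟨fun a b ha hb => ?_, fun c b d hb hd => ?_, fun z w b d hz hw hb hd => ?_⟩
  · apply h1 a b ha
    rcases key b with h | h | h <;> omega
  · have hd' := (p d).isLt
    have hczc : c ≠ zc := by rintro rfl; omega
    have hczc' : (q c : ℕ) ≠ q zc := fun h => hczc (pos_inj q h)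
    rcases key c with ⟨hc, hc'⟩ | ⟨rfl, hc'⟩ | ⟨hc0, hc, hc'⟩
    · apply h2 c b d _ hd
      rcases key b with h | ⟨rfl, h⟩ | h <;> omega
    · apply h3 zc c b d ezc ezo _ hd
      rcases key b with h | ⟨rfl, h⟩ | h <;> omega
    · apply h2 c b d _ hd
      rcases key b with h | ⟨rfl, h⟩ | h <;> omega
  · obtain rfl : z = zc := pos_inj p (by omega)
    have hzq : (q' z : ℕ) = q z := by rw [m1 z le_rfl]
    obtain rfl : b = zo := pos_inj q' (by omega)
    rcases key w with ⟨hc, hc'⟩ | ⟨rfl, hc'⟩ | ⟨hc0, hc, hc'⟩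
    · omega
    · exact h3 z w w d ezc ezo (by omega) hd
    · exact h2 w b d (by omega) hd

theorem TRel.left [DecidableEq A] {n : ℕ} {p q q' : A ≃ Fin n} {S : Equiv.Perm A}
    (h : TRel p q S)
    (a o : A) (ha : ∀ x, p a ≤ p x) (ho : ∀ x, q o ≤ q x)
    (m1 : ∀ b : A, q a ≤ q b → q' b = q b)
    (m2 : (q' o : ℕ) = (q a : ℕ) - 1)
    (m3 : ∀ b : A, ¬ q a ≤ q b → b ≠ o → (q' b : ℕ) = (q b : ℕ) - 1) :
    (p a : ℕ) = 0 ∧ (q o : ℕ) = 0 ∧ S o = a ∧ (q' = q ∨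
      ∃ c, a ≠ o ∧ a ≠ c ∧ c ≠ o ∧ (q' c : ℕ) = 0 ∧ TRel p q' (S * (swap o c * swap o a))) := by
  obtain ⟨h1, h2, h3⟩ := h
  have hn : 0 < n := (Nat.zero_le _).trans_lt (p a).isLt
  have ea : (p a : ℕ) = 0 := by
    have := ha (p.symm ⟨0, by omega⟩)
    simp [Fin.le_def] at this; omega
  have eo : (q o : ℕ) = 0 := by
    have := ho (q.symm ⟨0, by omega⟩)
    simp [Fin.le_def] at this; omega
  have hSo : S o = a := h1 a o ea eo
  refine ⟨ea, eo, hSo, ?_⟩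
  have key : ∀ b : A, ((q a : ℕ) ≤ q b ∧ (q' b : ℕ) = q b) ∨ (b = o ∧ (q' b : ℕ) = q a - 1) ∨
      (b ≠ o ∧ (q b : ℕ) < q a ∧ 0 < (q b : ℕ) ∧ (q' b : ℕ) = q b - 1) := by
    intro b
    by_cases hb : q a ≤ q b
    · exact Or.inl ⟨hb, by rw [m1 b hb]⟩
    · by_cases hz : b = o
      · subst hz; exact Or.inr (Or.inl ⟨rfl, m2⟩)
      · refine Or.inr (Or.inr ⟨hz, not_le.mp hb, ?_, m3 b hb hz⟩)
        have : (q b : ℕ) ≠ q o := fun h => hz (pos_inj q h)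
        omega
  by_cases hq : (q a : ℕ) ≤ 1
  · left
    ext b
    rcases key b with h | ⟨rfl, h⟩ | h <;> omega
  right
  have hqa := (q a).isLt
  have ec : (q (q.symm ⟨1, by omega⟩) : ℕ) = 1 := by simp
  generalize q.symm ⟨1, by omega⟩ = c at ec
  have hao : a ≠ o := by rintro rfl; omega
  have hac : a ≠ c := by rintro rfl; omega
  have hco : c ≠ o := by rintro rfl; omega
  have hqc : (q' c : ℕ) = 0 := by
    rcases key c with h | ⟨h, _⟩ | h
    · omega
    · exact absurd h hco
    · omega
  have hqa' : (q' a : ℕ) = q a := by rw [m1 a le_rfl]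
  refine ⟨c, hao, hac, hco, hqc, ?_⟩
  have co : (swap o c * swap o a) o = a := by
    simp [swap_apply_of_ne_of_ne hao hac]
  have ca : (swap o c * swap o a) a = c := by simp
  have cc : (swap o c * swap o a) c = o := by
    simp [swap_apply_of_ne_of_ne hco hac.symm]
  have cx : ∀ x, x ≠ o → x ≠ a → x ≠ c → (swap o c * swap o a) x = x := by
    intro x h1 h2 h3
    simp [swap_apply_of_ne_of_ne h1 h2, swap_apply_of_ne_of_ne h1 h3]
  generalize swap o c * swap o a = C at co ca cc cx
  -- the generic step: adjacency in `q'` pulled back through `C`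
  have adj : ∀ b e : A, (q' b : ℕ) = q' e + 1 →
      (e = o ∧ b = a ∧ (q (C b) : ℕ) = q o + 1) ∨ (e ≠ o ∧ (q (C b) : ℕ) = q e + 1) := by
    intro b e hbe
    by_cases heo : e = o
    · subst heo
      obtain rfl : b = a := pos_inj q' (by omega)
      left; refine ⟨rfl, rfl, ?_⟩; rw [ca]; omega
    right
    refine ⟨heo, ?_⟩
    by_cases hbo : b = o
    · subst hbo
      rw [co]
      rcases key e with h | ⟨h, _⟩ | h
      · omega
      · exact absurd h heo
      · omega
    by_cases hba : b = a
    · subst hba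
      exact absurd (pos_inj q' (by omega)) heo
    by_cases hbc : b = c
    · subst hbc; omega
    rw [cx b hbo hba hbc]
    rcases key e with h | ⟨h, _⟩ | h
    · rcases key b with h' | ⟨h', _⟩ | h'
      · omega
      · exact absurd h' hbo
      · omega
    · exact absurd h heo
    · have : (q b : ℕ) ≠ q a := fun h => hba (pos_inj q h)
      rcases key b with h' | ⟨h', _⟩ | h'
      · omega
      · exact absurd h' hbo
      · omega
  refine ⟨fun x b hx hb => ?_, fun e b d hb hd => ?_, fun z w b d hz hw hb hd => ?_⟩
  · obtain rfl : b = c := pos_inj q' (by omega)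
    obtain rfl : x = a := pos_inj p (by omega)
    simpa [cc] using hSo
  · rw [Equiv.Perm.mul_apply]
    rcases adj b e hb with ⟨rfl, rfl, h⟩ | ⟨_, h⟩
    · exact h2 _ _ _ h hd
    · exact h2 _ _ _ h hd
  · rw [Equiv.Perm.mul_apply]
    have hw' : (q w : ℕ) + 1 = n := by
      rcases key w with h | ⟨rfl, h⟩ | h <;> omega
    rcases adj b z hb with ⟨rfl, rfl, h⟩ | ⟨_, h⟩
    · exact h3 _ _ _ _ hz hw' h hd
    · exact h3 _ _ _ _ hz hw' h hd

/-- `Q` from `S` and `X`. -/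
def qHat [DecidableEq A] (X : A) (S : Equiv.Perm A) : Equiv.Perm A := swap X (S X) * S

theorem qHat_conj [DecidableEq A] (X : A) (S : Equiv.Perm A) (φ : Equiv.Perm A) :
    qHat (φ X) (φ * S * φ⁻¹) = φ * qHat X S * φ⁻¹ := by
  unfold qHat
  have : (φ * S * φ⁻¹) (φ X) = φ (S X) := by simp
  rw [this, Equiv.swap_apply_apply]
  group

theorem qHat_alt [DecidableEq A] (X o : A) (S : Equiv.Perm A) (h : S o = X) :
    qHat X S = S * swap o X := by
  subst h
  unfold qHat
  rw [Equiv.swap_apply_apply]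
  group

theorem step_left [DecidableEq A] (π π' : RPair A) (S : Equiv.Perm A)
    (hT : TRel (π false) (π true) S) (X : A) (hX : (π false X : ℕ) = 0)
    (hm : LeftMove π π') :
    ∃ (S' φ : Equiv.Perm A), TRel (π' false) (π' true) S' ∧ Equiv.Perm.sign φ = 1 ∧
      (π' false (φ X) : ℕ) = 0 ∧ qHat (φ X) S' = φ * qHat X S * φ⁻¹ := by
  obtain ⟨ε, a, o, ha, ho, e, m1, m2, m3⟩ := hm
  cases ε
  · simp only [Bool.not_false] at *
    obtain ⟨h1, h2, h3, h | ⟨c, hao, hac, hco, hc, h⟩⟩ := hT.left a o ha ho m1 m2 m3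
    · exact ⟨S, 1, by rw [e, h]; exact hT, by simp, by simpa [e] using hX, by simp⟩
    · obtain rfl : X = a := pos_inj (π false) (by omega)
      refine ⟨_, 1, by rw [e]; exact h, by simp, by simpa [e] using hX, ?_⟩
      have hc' : (S * (swap o c * swap o X)) c = X := by
        simp [swap_apply_of_ne_of_ne hco hac.symm, h3]
      simp only [Equiv.Perm.coe_one, id, one_mul, inv_one, mul_one]
      rw [qHat_alt X o S h3, qHat_alt X c _ hc']
      ext x
      simp only [Equiv.Perm.mul_apply, Equiv.swap_apply_def]
      congr 1
      grind
  · simp only [Bool.not_true] at *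
    obtain ⟨h1, h2, h3, h | ⟨c, hao, hac, hco, hc, h⟩⟩ := hT.flip.left a o ha ho m1 m2 m3
    · exact ⟨S, 1, by rw [e, h]; exact hT, by simp, by simpa [h] using hX, by simp⟩
    · obtain rfl : X = o := pos_inj (π false) (by omega)
      have hφ : (swap X c * swap X a)⁻¹ X = c := by
        rw [Equiv.Perm.inv_eq_iff_eq]
        simp [swap_apply_of_ne_of_ne hco hac.symm]
      have hSa : S a = X := by rw [Equiv.Perm.inv_eq_iff_eq] at h3; exact h3.symm
      refine ⟨(swap X c * swap X a)⁻¹ * S, (swap X c * swap X a)⁻¹, ?_, ?_, ?_, ?_⟩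
      · rw [e]; have := h.flip; simpa using this
      · simp [Equiv.Perm.sign_swap hao.symm, Equiv.Perm.sign_swap hco.symm]
      · rw [hφ]; exact hc
      · rw [hφ, qHat_alt X a S hSa, qHat_alt c a _ (by rw [Equiv.Perm.mul_apply, hSa, hφ])]
        have : swap a c = swap a X * (swap X c * swap X a) := by
          ext x
          simp only [Equiv.Perm.mul_apply, Equiv.swap_apply_def]
          grind
        rw [this]; group

theorem step_right [DecidableEq A] (π π' : RPair A) (S : Equiv.Perm A)
    (hT : TRel (π false) (π true) S) (X : A) (hX : (π false X : ℕ) = 0)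
    (hm : RightMove π π') :
    TRel (π' false) (π' true) S ∧ (π' false X : ℕ) = 0 := by
  obtain ⟨ε, zc, zo, h1, h2, e, m1, m2, m3⟩ := hm
  cases ε
  · simp only [Bool.not_false] at *
    rw [e]
    exact ⟨hT.right zc zo h1 h2 m1 m2 m3, hX⟩
  · simp only [Bool.not_true] at *
    rw [e]
    refine ⟨by simpa using (hT.flip.right zc zo h1 h2 m1 m2 m3).flip, ?_⟩
    rw [m1 X (by rw [Fin.le_def]; omega), hX]

theorem chain [DecidableEq A] (π ρ : RPair A) (S : Equiv.Perm A)
    (hT : TRel (π false) (π true) S) (X : A) (hX : (π false X : ℕ) = 0)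
    (h : ρ ∈ EClass π) :
    ∃ (S' φ : Equiv.Perm A), TRel (ρ false) (ρ true) S' ∧ Equiv.Perm.sign φ = 1 ∧
      (ρ false (φ X) : ℕ) = 0 ∧ qHat (φ X) S' = φ * qHat X S * φ⁻¹ := by
  change Relation.ReflTransGen _ _ _ at h
  induction h with
  | refl => exact ⟨S, 1, hT, by simp, by simpa using hX, by simp⟩
  | tail _ hm ih =>
    obtain ⟨S', φ, i1, i2, i3, i4⟩ := ih
    rcases hm with hm | hm
    · obtain ⟨j1, j2⟩ := step_right _ _ _ i1 _ i3 hm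
      exact ⟨S', φ, j1, i2, j2, i4⟩
    · obtain ⟨S'', ψ, j1, j2, j3, j4⟩ := step_left _ _ _ i1 _ i3 hm
      refine ⟨S'', ψ * φ, j1, by simp [i2, j2], j3, ?_⟩
      rw [Equiv.Perm.mul_apply, j4, i4]
      group

theorem IsS.tRel [Nonempty A] {π : RPair A} {S : Equiv.Perm A} (h : IsS π S) :
    TRel (π false) (π true) S := by
  refine ⟨fun a b ha hb => ?_, fun c b d hb hd => ?_, fun z w b d hz hw hb hd => ?_⟩
  · rw [(h b).1 (Fin.ext hb), Equiv.symm_apply_eq]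
    exact Fin.ext ha.symm
  · have hlt := (π false d).isLt
    have hne : π true b ≠ posFirst A := by
      intro h; rw [h] at hb; simp [posFirst] at hb
    apply pos_inj (π false)
    have e := ((h b).2 hne).2 (by
      intro h'
      have : c = (π false).symm (posLast A) := pos_inj (π true) (by omega)
      have : (π false c : ℕ) = Fintype.card A - 1 := by rw [this]; simp [posLast]
      omega)
    rw [e, hd]
    have : (π true).symm ⟨(π true b : ℕ) - 1,
        Nat.lt_of_le_of_lt (Nat.sub_le _ _) (π true b).isLt⟩ = c := by
      rw [Equiv.symm_apply_eq]; apply Fin.ext; simp; omega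
    rw [this]
  · have hne : π true b ≠ posFirst A := by
      intro h; rw [h] at hb; simp [posFirst] at hb
    apply pos_inj (π false)
    have ez : (π false).symm (posLast A) = z := by
      rw [Equiv.symm_apply_eq]; apply Fin.ext; simp [posLast]; omega
    have ew : (π true).symm (posLast A) = w := by
      rw [Equiv.symm_apply_eq]; apply Fin.ext; simp [posLast]; omega
    have e := ((h b).2 hne).1 (by rw [ez]; exact hb)
    rw [e, ew, hd]

theorem IsQ.eq_qHat [Nonempty A] [DecidableEq A] {π : RPair A} {S Q : Equiv.Perm A}
    (h : IsQ π S Q) : Q = qHat (XOf π) S := by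
  ext b
  simp only [qHat, Equiv.Perm.mul_apply]
  by_cases hb : b = XOf π
  · subst hb; rw [h.1]; simp
  · by_cases hs : S b = XOf π
    · rw [(h.2 b hb).1 hs, hs]; simp
    · rw [(h.2 b hb).2 hs, swap_apply_of_ne_of_ne hs]
      exact fun h => hb (S.injective h)

/-- if `Z(π) ⊆ Alt(A)` then `G(π) ⊆ Alt(A)`. -/
theorem stmt6 {A : Type*} [Fintype A] [DecidableEq A] [Nonempty A]
    (hN : 2 ≤ Fintype.card A) (π : RPair A) (hπ : PairIrreducible π)
    (S Q : Equiv.Perm A) (hS : IsS π S) (hQ : IsQ π S Q)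
    (hZ : ZOf π Q ⊆ (alternatingGroup A : Set (Equiv.Perm A))) :
    renamings π ⊆ (alternatingGroup A : Set (Equiv.Perm A)) := by
  intro ν hν
  have hT := hS.tRel
  have hX : (π false (XOf π) : ℕ) = 0 := by simp [XOf, posFirst]
  obtain ⟨S', φ, i1, i2, i3, i4⟩ := chain π _ S hT _ hX hν
  have hT' : TRel (pairRename π ν false) (pairRename π ν true) (ν⁻¹ * S * ν) := by
    obtain ⟨h1, h2, h3⟩ := hT
    simp only [pairRename, Equiv.trans_apply]
    refine ⟨fun a b ha hb => ?_, fun c b d hb hd => ?_, fun z w b d hz hw hb hd => ?_⟩ <;>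
      rw [Equiv.Perm.mul_apply, Equiv.Perm.mul_apply, Equiv.Perm.inv_eq_iff_eq]
    · exact h1 _ _ ha hb
    · exact h2 _ _ _ hb hd
    · exact h3 _ _ _ _ hz hw hb hd
  have hfix : ν (φ (XOf π)) = XOf π := by
    apply pos_inj (π false)
    rw [hX]; exact i3
  have hφX : φ (XOf π) = ν⁻¹ (XOf π) := by
    rw [eq_comm, Equiv.Perm.inv_eq_iff_eq, hfix]
  have hc := qHat_conj (XOf π) S ν⁻¹
  rw [inv_inv] at hc
  rw [i1.unique hT', hφX, hc, ← hQ.eq_qHat] at i4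
  have hz : ν * φ ∈ ZOf π Q := by
    refine ⟨hfix, ?_⟩
    have : (ν * φ)⁻¹ * Q * (ν * φ) = φ⁻¹ * (ν⁻¹ * Q * ν) * φ := by group
    rw [this, i4]; group
  have hs := hZ hz
  rw [SetLike.mem_coe, Equiv.Perm.mem_alternatingGroup] at hs ⊢
  simpa [i2] using hs
end

section
/- For every irreducible pair π on a finite alphabet A, the alternating group Alt(A) is contained in the renaming set G(π). -/
open Equiv

variable {A : Type*} [Fintype A]

/-! ### Auxiliary material -/

/-- One step of the extended Rauzy diagram. -/
def Rch (π ρ : RPair A) : Prop :=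
  Relation.ReflTransGen (fun x y => RightMove x y ∨ LeftMove x y) π ρ

def Eqr (π ρ : RPair A) : Prop := Rch π ρ ∧ Rch ρ π

theorem Eqr.trans {π ρ κ : RPair A} (h : Eqr π ρ) (h' : Eqr ρ κ) : Eqr π κ :=
  ⟨Relation.ReflTransGen.trans h.1 h'.1, Relation.ReflTransGen.trans h'.2 h.2⟩

theorem Eqr.symm {π ρ : RPair A} (h : Eqr π ρ) : Eqr ρ π := ⟨h.2, h.1⟩

/-- Action on positions. -/
def act (π : RPair A) (g : Bool → Perm (Fin (Fintype.card A))) : RPair A :=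
  fun ε => (π ε).trans (g ε)

theorem act_apply (π : RPair A) (g : Bool → Perm (Fin (Fintype.card A))) (ε : Bool) (x : A) :
    act π g ε x = g ε (π ε x) := rfl

theorem rename_apply (π : RPair A) (ν : Perm A) (ε : Bool) (x : A) :
    pairRename π ν ε x = π ε (ν x) := rfl

theorem act_mul (π : RPair A) (g h : Bool → Perm (Fin (Fintype.card A))) :
    act (act π g) h = act π (h * g) := rfl

theorem act_one (π : RPair A) : act π 1 = π := rfl

theorem pair_ext {π ρ : RPair A} (h : ∀ ε x, π ε x = ρ ε x) : π = ρ := by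
  funext ε; ext x; rw [h]

theorem iter_nat (P : RPair A → Prop) (g : Bool → Perm (Fin (Fintype.card A)))
    (h : ∀ π, P π → Rch π (act π g) ∧ P (act π g)) (n : ℕ) (π : RPair A) (hπ : P π) :
    Rch π (act π (g ^ n)) ∧ P (act π (g ^ n)) := by
  induction n with
  | zero => rw [pow_zero, act_one]; exact ⟨Relation.ReflTransGen.refl, hπ⟩
  | succ n ih =>
    have := h _ ih.2
    rw [act_mul, ← pow_succ'] at this
    exact ⟨Relation.ReflTransGen.trans ih.1 this.1, this.2⟩

theorem iter_int (P : RPair A → Prop) (g : Bool → Perm (Fin (Fintype.card A)))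
    (h : ∀ π, P π → Rch π (act π g) ∧ P (act π g)) (n : ℤ) (π : RPair A) (hπ : P π) :
    Eqr π (act π (g ^ n)) ∧ P (act π (g ^ n)) := by
  have key : ∀ (n : ℤ) (π : RPair A), P π → Rch π (act π (g ^ n)) ∧ P (act π (g ^ n)) := by
    intro n π hπ
    have h1 : g ^ n ∈ Subgroup.zpowers g := ⟨n, rfl⟩
    rw [← mem_powers_iff_mem_zpowers] at h1
    obtain ⟨m, hm⟩ := h1
    have hm' : g ^ m = g ^ n := hm
    rw [← hm']
    exact iter_nat P g h m π hπ
  have h1 := key n π hπ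
  have h2 := key (-n) _ h1.2
  rw [act_mul, ← zpow_add, neg_add_cancel, zpow_zero, act_one] at h2
  exact ⟨⟨h1.1, h2.1⟩, h1.2⟩

/-- Row-wise pair of position permutations. -/
def pr {N : ℕ} (ε : Bool) (x y : Perm (Fin N)) : Bool → Perm (Fin N) :=
  fun δ => if δ = ε then x else y

theorem pr_self {N : ℕ} (ε : Bool) (x y : Perm (Fin N)) : pr ε x y ε = x := by simp [pr]

theorem pr_not {N : ℕ} (ε : Bool) (x y : Perm (Fin N)) : pr ε x y (!ε) = y := by
  cases ε <;> simp [pr]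

theorem pr_mul {N : ℕ} (ε : Bool) (x y x' y' : Perm (Fin N)) :
    pr ε x y * pr ε x' y' = pr ε (x * x') (y * y') := by
  funext δ; simp only [pr, Pi.mul_apply]; split_ifs <;> rfl

theorem pr_flip {N : ℕ} (ε : Bool) (x y : Perm (Fin N)) : pr (!ε) x y = pr ε y x := by
  funext δ; cases δ <;> cases ε <;> simp [pr]

theorem pr_zpow {N : ℕ} (ε : Bool) (x y : Perm (Fin N)) (n : ℤ) :
    pr ε x y ^ n = pr ε (x ^ n) (y ^ n) := by
  funext δ; simp only [pr, Pi.pow_apply]; split_ifs <;> rfl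

theorem inv_app {B : Type*} (f : Perm B) (x : B) : f⁻¹ (f x) = x := f.symm_apply_apply x

/-- rotation of the positions after `k`. -/
def IsRot {N : ℕ} (k : ℕ) (c : Perm (Fin N)) : Prop :=
  ∀ x : Fin N, (c x : ℕ) = if (x : ℕ) ≤ k then (x : ℕ) else if (x : ℕ) + 1 = N then k + 1 else x + 1

theorem exists_rot {N : ℕ} (k : ℕ) (hk : k + 1 < N) : ∃ c : Perm (Fin N), IsRot k c := by
  let f : Fin N → Fin N := fun x =>
    ⟨if (x : ℕ) ≤ k then (x : ℕ) else if (x : ℕ) + 1 = N then k + 1 else x + 1, by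
      have := x.2
      split_ifs <;> omega⟩
  have hf : Function.Injective f := by
    intro x y hxy
    have h := congrArg Fin.val hxy
    have hx := x.2
    have hy := y.2
    simp only [f] at h
    apply Fin.ext
    split_ifs at h <;> omega
  exact ⟨Equiv.ofBijective f (Finite.injective_iff_bijective.mp hf), fun x => rfl⟩

theorem IsRot.exists_zpow {N : ℕ} {k : ℕ} {c : Perm (Fin N)} (hc : IsRot k c) (l : Fin N)
    (hl : (l : ℕ) + 1 = N) (x : Fin N) (hx : k < x) : ∃ i : ℤ, (c ^ i) x = l := by
  obtain ⟨d, hd⟩ : ∃ d : ℕ, (x : ℕ) + d = l := ⟨l - x, by have := x.2; omega⟩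
  induction d generalizing x with
  | zero => exact ⟨0, by apply Fin.ext; simpa using hd⟩
  | succ d ih =>
    have h := hc x
    rw [if_neg (by omega), if_neg (by omega)] at h
    obtain ⟨i, hi⟩ := ih (c x) (by omega) (by omega)
    refine ⟨i + 1, ?_⟩
    rw [zpow_add, Perm.mul_apply, zpow_one, hi]

theorem right_step (e : Bool) (z : A) (π : RPair A)
    (c : Perm (Fin (Fintype.card A)))
    (hz : (π e z : ℕ) + 1 = Fintype.card A) (hk : (π (!e) z : ℕ) + 1 < Fintype.card A)
    (hc : IsRot (π (!e) z : ℕ) c) : RightMove π (act π (pr e 1 c)) := by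
  refine ⟨e, z, (π (!e)).symm ⟨Fintype.card A - 1, by omega⟩, ?_, ?_, ?_, ?_, ?_, ?_⟩
  · intro x; rw [Fin.le_def]; have := (π e x).2; omega
  · intro x; rw [Equiv.apply_symm_apply, Fin.le_def]; have := (π (!e) x).2; simp only; omega
  · ext x; rw [act_apply, pr_self]; rfl
  · intro b hb
    rw [act_apply, pr_not]; apply Fin.ext; rw [hc, if_pos (by simpa using hb)]
  · rw [act_apply, pr_not, Equiv.apply_symm_apply, hc]
    simp only
    rw [if_neg (by omega), if_pos (by omega)]
  · intro b hb hne
    rw [act_apply, pr_not, hc]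
    rw [Fin.le_def] at hb
    rw [if_neg hb, if_neg]
    intro h
    apply hne
    rw [Equiv.eq_symm_apply]
    apply Fin.ext
    simp only; omega

theorem left_step (e : Bool) (a : A) (π : RPair A)
    (c : Perm (Fin (Fintype.card A))) (hN : 2 ≤ Fintype.card A)
    (hz : (π e a : ℕ) = 0) (hk : (π (!e) a : ℕ) + 1 = Fintype.card A)
    (hc : ∀ x : Fin (Fintype.card A), (c x : ℕ) =
      if (x : ℕ) + 1 = Fintype.card A then (x : ℕ) else
        if (x : ℕ) = 0 then Fintype.card A - 2 else x - 1) :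
    LeftMove π (act π (pr e 1 c)) := by
  refine ⟨e, a, (π (!e)).symm ⟨0, by omega⟩, ?_, ?_, ?_, ?_, ?_, ?_⟩
  · intro x; rw [Fin.le_def]; omega
  · intro x; rw [Equiv.apply_symm_apply, Fin.le_def]; simp only; omega
  · ext x; rw [act_apply, pr_self]; rfl
  · intro b hb
    rw [Fin.le_def] at hb
    have := (π (!e) b).2
    rw [act_apply, pr_not]; apply Fin.ext; rw [hc, if_pos (by omega)]
  · rw [act_apply, pr_not, Equiv.apply_symm_apply, hc]
    simp only
    rw [if_neg (by omega)]
    simp only [if_true]; omega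
  · intro b hb hne
    rw [act_apply, pr_not, hc]
    rw [Fin.le_def] at hb
    rw [if_neg (by omega), if_neg]
    intro h
    apply hne
    rw [Equiv.eq_symm_apply]
    apply Fin.ext
    simp only; omega

/-! ### Renaming -/

theorem right_rename {π ρ : RPair A} (ν : Perm A) (h : RightMove π ρ) :
    RightMove (pairRename π ν) (pairRename ρ ν) := by
  obtain ⟨ε, zc, zo, h1, h2, h3, h4, h5, h6⟩ := h
  refine ⟨ε, ν.symm zc, ν.symm zo, ?_, ?_, ?_, ?_, ?_, ?_⟩
  · intro x; simpa [rename_apply] using h1 _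
  · intro x; simpa [rename_apply] using h2 _
  · simp only [pairRename, h3]
  · intro b hb; simp only [rename_apply, Equiv.apply_symm_apply] at hb ⊢; exact h4 _ hb
  · simp only [rename_apply, Equiv.apply_symm_apply]; exact h5
  · intro b hb hne; simp only [rename_apply, Equiv.apply_symm_apply] at hb ⊢
    exact h6 _ hb (fun h => hne (by rw [← h, Equiv.symm_apply_apply]))

theorem left_rename {π ρ : RPair A} (ν : Perm A) (h : LeftMove π ρ) :
    LeftMove (pairRename π ν) (pairRename ρ ν) := by
  obtain ⟨ε, zc, zo, h1, h2, h3, h4, h5, h6⟩ := h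
  refine ⟨ε, ν.symm zc, ν.symm zo, ?_, ?_, ?_, ?_, ?_, ?_⟩
  · intro x; simpa [rename_apply] using h1 _
  · intro x; simpa [rename_apply] using h2 _
  · simp only [pairRename, h3]
  · intro b hb; simp only [rename_apply, Equiv.apply_symm_apply] at hb ⊢; exact h4 _ hb
  · simp only [rename_apply, Equiv.apply_symm_apply]; exact h5
  · intro b hb hne; simp only [rename_apply, Equiv.apply_symm_apply] at hb ⊢
    exact h6 _ hb (fun h => hne (by rw [← h, Equiv.symm_apply_apply]))

theorem rch_rename {π ρ : RPair A} (ν : Perm A) (h : Rch π ρ) :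
    Rch (pairRename π ν) (pairRename ρ ν) := by
  induction h with
  | refl => exact Relation.ReflTransGen.refl
  | tail _ hxy ih => exact Relation.ReflTransGen.tail ih (hxy.imp (right_rename ν) (left_rename ν))

/-! ### Irreducibility -/

def Irr (π : RPair A) : Prop :=
  ∀ (ε : Bool) (k : Fin (Fintype.card A)),
    (∀ x : A, π ε x ≤ k → π (!ε) x ≤ k) → (k : ℕ) + 1 = Fintype.card A

theorem incl_symm (π : RPair A) (ε : Bool) (k : Fin (Fintype.card A))
    (h : ∀ x : A, π ε x ≤ k → π (!ε) x ≤ k) (x : A) (hx : π (!ε) x ≤ k) : π ε x ≤ k := by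
  classical
  let S : Finset A := Finset.univ.filter fun x => π ε x ≤ k
  let T : Finset A := Finset.univ.filter fun x => π (!ε) x ≤ k
  have hc : ∀ δ, (Finset.univ.filter fun x => π δ x ≤ k).card = (Finset.Iic k).card := by
    intro δ
    refine Finset.card_bij (fun x _ => π δ x) ?_ ?_ ?_
    · intro a ha; simpa using ha
    · intro a _ b _ hab; exact (π δ).injective hab
    · intro b hb; exact ⟨(π δ).symm b, by simpa using hb, by simp⟩
  have hST : S ⊆ T := by
    intro y hy
    simp only [S, T, Finset.mem_filter, Finset.mem_univ, true_and] at hy ⊢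
    exact h y hy
  have heq : S = T := Finset.eq_of_subset_of_card_le hST (by simp only [S, T, hc]; exact le_rfl)
  have : x ∈ T := by simpa [T] using hx
  rw [← heq] at this
  simpa [S] using this

theorem irr_of (π : RPair A) (h : PairIrreducible π) : Irr π := by
  intro ε k hk
  cases ε
  · exact h k hk
  · exact h k (fun x hx => incl_symm π true k hk x hx)

theorem irr_right (e : Bool) (z : A) (π : RPair A)
    (c : Perm (Fin (Fintype.card A)))
    (hz : (π e z : ℕ) + 1 = Fintype.card A)
    (hc : IsRot (π (!e) z : ℕ) c) (hπ : Irr π) : Irr (act π (pr e 1 c)) := by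
  intro δ k hk
  by_contra hlt
  have hk2 := k.2
  have hk' : ∀ x, act π (pr e 1 c) e x ≤ k ↔ act π (pr e 1 c) (!e) x ≤ k := by
    intro x
    have h1 := hk x
    have h2 := incl_symm _ δ k hk x
    cases δ <;> cases e <;> simp only [Bool.not_true, Bool.not_false] at * <;> tauto
  simp only [act_apply, pr_self, pr_not, Perm.one_apply, Fin.le_def] at hk'
  have hzz := hk' z
  rw [hc, if_pos le_rfl] at hzz
  apply hlt
  apply hπ e k
  intro x hx
  rw [Fin.le_def] at *
  have h := (hk' x).1 hx
  rw [hc] at h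
  split_ifs at h <;> omega

theorem rot_eqr (e : Bool) (z : A) (π : RPair A)
    (c : Perm (Fin (Fintype.card A)))
    (hz : (π e z : ℕ) + 1 = Fintype.card A) (hk : (π (!e) z : ℕ) + 1 < Fintype.card A)
    (hc : IsRot (π (!e) z : ℕ) c) (i : ℤ) :
    Eqr π (act π (pr e 1 (c ^ i))) ∧ (Irr π → Irr (act π (pr e 1 (c ^ i)))) := by
  have := iter_int (fun ρ => (ρ e z = π e z ∧ ρ (!e) z = π (!e) z) ∧ (Irr π → Irr ρ)) (pr e 1 c)
    (by
      rintro ρ ⟨⟨h1, h2⟩, h3⟩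
      refine ⟨Relation.ReflTransGen.single (Or.inl ?_), ⟨?_, ?_⟩, fun h => ?_⟩
      · apply right_step e z ρ c
        · rw [h1]; exact hz
        · rw [h2]; exact hk
        · rw [h2]; exact hc
      · rw [act_apply, pr_self, h1]; rfl
      · rw [act_apply, pr_not, h2]; apply Fin.ext; rw [hc, if_pos le_rfl]
      · apply irr_right e z ρ c
        · rw [h1]; exact hz
        · rw [h2]; exact hc
        · exact h3 h) i π ⟨⟨rfl, rfl⟩, id⟩
  rw [pr_zpow, one_zpow] at this
  exact ⟨this.1, this.2.2⟩

theorem exists_std (π : RPair A) (hN : 2 ≤ Fintype.card A) (hπ : Irr π) :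
    ∃ ρ : RPair A, Eqr π ρ ∧ ∃ (ε : Bool) (z : A),
      (ρ ε z : ℕ) = 0 ∧ (ρ (!ε) z : ℕ) + 1 = Fintype.card A := by
  classical
  let Q : ℕ → Prop := fun m => ∃ ρ : RPair A, Eqr π ρ ∧ Irr ρ ∧ ∃ (ε : Bool) (z : A),
      (ρ ε z : ℕ) + 1 = Fintype.card A ∧ (ρ (!ε) z : ℕ) = m
  have hQ : ∃ m, Q m := ⟨_, π, ⟨Relation.ReflTransGen.refl, Relation.ReflTransGen.refl⟩, hπ, true,
    (π true).symm ⟨Fintype.card A - 1, by omega⟩, by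
      rw [Equiv.apply_symm_apply]; simp only; omega, rfl⟩
  obtain ⟨ρ, hρ, hi, ε, z, h1, h2⟩ := Nat.find_spec hQ
  have hmin : ∀ m, Q m → Nat.find hQ ≤ m := fun m hm => Nat.find_min' hQ hm
  generalize Nat.find hQ = m at *
  have hm := (ρ (!ε) z).2
  rcases Nat.eq_zero_or_pos m with h0 | h0
  · exact ⟨ρ, hρ, !ε, z, by omega, by rw [Bool.not_not]; exact h1⟩
  · exfalso
    have := hi ε ⟨m - 1, by omega⟩ ?_
    · simp only at this; omega
    · intro x hx
      rw [Fin.le_def] at *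
      simp only at *
      by_contra hcon
      have hx2 := (ρ (!ε) x).2
      by_cases hxz : x = z
      · subst hxz; omega
      · have hne : (ρ (!ε) x : ℕ) ≠ ρ (!ε) z := fun h => hxz ((ρ (!ε)).injective (Fin.ext h))
        obtain ⟨c, hc⟩ := exists_rot (N := Fintype.card A) (ρ (!ε) z : ℕ) (by omega)
        obtain ⟨i, hci⟩ := hc.exists_zpow ⟨Fintype.card A - 1, by omega⟩ (by simp only; omega)
          (ρ (!ε) x) (by omega)
        have hr := rot_eqr ε z ρ c h1 (by omega) hc i
        have := hmin (ρ ε x) ⟨_, hρ.trans hr.1, hr.2 hi, !ε, x, by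
          rw [act_apply, pr_not, hci]; simp only; omega, by
          rw [Bool.not_not, act_apply, pr_self]; rfl⟩
        omega

/-! ### Standard pairs -/

theorem exists_shift (N : ℕ) (hN : 2 ≤ N) : ∃ s : Perm (Fin N), ∀ x : Fin N,
    (s x : ℕ) = if (x : ℕ) + 1 = N then 0 else (x : ℕ) + 1 := by
  let f : Fin N → Fin N := fun x => ⟨if (x : ℕ) + 1 = N then 0 else (x : ℕ) + 1, by
      have := x.2
      split_ifs <;> omega⟩
  have hf : Function.Injective f := by
    intro x y hxy
    have h := congrArg Fin.val hxy
    have hx := x.2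
    have hy := y.2
    simp only [f] at h
    apply Fin.ext
    split_ifs at h <;> omega
  exact ⟨Equiv.ofBijective f (Finite.injective_iff_bijective.mp hf), fun x => rfl⟩

section shift

variable {N : ℕ} (s : Perm (Fin N)) (o l : Fin N)

/-- data of the cyclic shift of positions -/
def ShiftData : Prop :=
  2 ≤ N ∧ (o : ℕ) = 0 ∧ (l : ℕ) + 1 = N ∧
    ∀ x : Fin N, (s x : ℕ) = if (x : ℕ) + 1 = N then 0 else (x : ℕ) + 1

variable {s o l}

theorem swap_val (x : Fin N) (hl : (l : ℕ) + 1 = N) (ho : (o : ℕ) = 0) :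
    (swap o l x : ℕ) = if (x : ℕ) = 0 then N - 1 else if (x : ℕ) + 1 = N then 0 else x := by
  rw [swap_apply_def]
  have h1 : x = o ↔ (x : ℕ) = 0 := by rw [Fin.ext_iff, ho]
  have h2 : x = l ↔ (x : ℕ) + 1 = N := by rw [Fin.ext_iff]; omega
  simp only [h1, h2]
  split_ifs <;> omega

theorem c1_rot (h : ShiftData s o l) : IsRot 0 (s * swap o l) := by
  obtain ⟨hN, ho, hl, hs⟩ := h
  intro x
  have := x.2
  rw [Perm.mul_apply, hs, swap_val x hl ho]
  split_ifs <;> omega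

theorem c2_inv (h : ShiftData s o l) (x : Fin N) : ((swap o l * s)⁻¹ x : ℕ) =
      if (x : ℕ) + 1 = N then (x : ℕ) else if (x : ℕ) = 0 then N - 2 else x - 1 := by
  obtain ⟨hN, ho, hl, hs⟩ := h
  obtain ⟨y, rfl⟩ := (swap o l * s).surjective x
  have hy := y.2
  have hv : ((swap o l * s) y : ℕ) =
      if (y : ℕ) + 1 = N then N - 1 else if (y : ℕ) + 2 = N then 0 else y + 1 := by
    rw [Perm.mul_apply, swap_val _ hl ho, hs]
    by_cases h1 : (y : ℕ) + 1 = N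
    · simp [h1]
    · rw [if_neg h1, if_neg h1, if_neg (by omega)]
  rw [inv_app]
  generalize ((swap o l * s) y : ℕ) = v at hv
  split_ifs at hv <;> split_ifs <;> omega

theorem c2_zpow (h : ShiftData s o l) (x : Fin N) (hx : x ≠ l) :
    ∃ i : ℤ, ((swap o l * s) ^ i) x = o := by
  have hc := c2_inv h
  obtain ⟨hN, ho, hl, hs⟩ := h
  have hx' : (x : ℕ) < l := by
    have : (x : ℕ) ≠ l := fun h => hx (Fin.ext h)
    have := x.2
    omega
  clear hx
  obtain ⟨d, hd⟩ : ∃ d : ℕ, (x : ℕ) = d := ⟨_, rfl⟩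
  induction d generalizing x with
  | zero => exact ⟨0, by apply Fin.ext; simp [hd, ho]⟩
  | succ d ih =>
    have h := hc x
    rw [if_neg (by omega), if_neg (by omega)] at h
    obtain ⟨i, hi⟩ := ih ((swap o l * s)⁻¹ x) (by omega) (by omega)
    refine ⟨i - 1, ?_⟩
    rw [zpow_sub, Perm.mul_apply, zpow_one, hi]

end shift

def Std (o l : Fin (Fintype.card A)) (π : RPair A) (ε : Bool) (a : A) : Prop :=
  π ε a = o ∧ π (!ε) a = l

section main

variable {s : Perm (Fin (Fintype.card A))} {o l : Fin (Fintype.card A)}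

theorem c1_zpow_o (h : ShiftData s o l) (i : ℤ) : ((s * swap o l) ^ i) o = o := by
  have : (s * swap o l) o = o := by
    apply Fin.ext; rw [c1_rot h o, if_pos (by rw [h.2.1])]
  exact Perm.zpow_apply_eq_self_of_apply_eq_self this i

theorem c2_l (h : ShiftData s o l) : (swap o l * s)⁻¹ l = l := by
  apply Fin.ext; rw [c2_inv h, if_pos h.2.2.1]

theorem c2_zpow_l (h : ShiftData s o l) (i : ℤ) : ((swap o l * s) ^ i) l = l := by
  have := Perm.zpow_apply_eq_self_of_apply_eq_self (c2_l h) (-i)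
  rwa [inv_zpow', neg_neg] at this

theorem std_rot (h : ShiftData s o l) (π : RPair A) (ε : Bool) (a : A) (hs : Std o l π ε a)
    (i j : ℤ) : Eqr π (act π (pr ε ((s * swap o l) ^ i) ((swap o l * s) ^ j))) ∧
      Std o l (act π (pr ε ((s * swap o l) ^ i) ((swap o l * s) ^ j))) ε a := by
  have hN := h.1
  refine ⟨?_, ?_, ?_⟩
  · have h1 : Eqr π (act π (pr ε ((s * swap o l) ^ i) 1)) := by
      have h0 : (π ε a : ℕ) = 0 := by rw [hs.1, h.2.1]
      have := (rot_eqr (!ε) a π (s * swap o l) (by rw [hs.2, h.2.2.1])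
        (by rw [Bool.not_not, h0]; omega) (by rw [Bool.not_not, h0]; exact c1_rot h) i).1
      rwa [pr_flip] at this
    have hs1 : Std o l (act π (pr ε ((s * swap o l) ^ i) 1)) ε a := by
      refine ⟨?_, ?_⟩
      · rw [act_apply, pr_self, hs.1, c1_zpow_o h]
      · rw [act_apply, pr_not, hs.2]; rfl
    have h2 := (iter_int (fun ρ => Std o l ρ ε a) (pr ε 1 (swap o l * s)⁻¹) (by
      intro ρ hρ
      refine ⟨Relation.ReflTransGen.single (Or.inr ?_), ?_, ?_⟩
      · apply left_step ε a ρ _ hN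
        · rw [hρ.1, h.2.1]
        · rw [hρ.2, h.2.2.1]
        · exact c2_inv h
      · rw [act_apply, pr_self, hρ.1]; rfl
      · rw [act_apply, pr_not, hρ.2, c2_l h]) (-j) _ hs1).1
    have h3 := h1.trans h2
    rw [act_mul, pr_zpow, pr_mul, inv_zpow', neg_neg, one_zpow, one_mul, mul_one] at h3
    exact h3
  · rw [act_apply, pr_self, hs.1, c1_zpow_o h]
  · rw [act_apply, pr_not, hs.2, c2_zpow_l h]

theorem conj_zpow' {G : Type*} [Group G] (s t : G) (i : ℤ) :
    s⁻¹ * (s * t) ^ i = (t * s) ^ i * s⁻¹ := by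
  have : t * s = s⁻¹ * (s * t) * (s⁻¹)⁻¹ := by group
  rw [this, conj_zpow]; group

theorem std_swap [DecidableEq A] (h : ShiftData s o l) (π : RPair A) (ε : Bool) (a z : A)
    (hs : Std o l π ε a) (hz : z ≠ a) :
    Eqr π (act (pairRename π (swap a z)) (pr ε s⁻¹ s)) ∧
      Std o l (act (pairRename π (swap a z)) (pr ε s⁻¹ s)) (!ε) z := by
  have hso : s l = o := by
    apply Fin.ext; rw [h.2.2.2, if_pos h.2.2.1, h.2.1]
  have hso' : s⁻¹ o = l := by rw [← hso, inv_app]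
  have hstd : Std o l (act (pairRename π (swap a z)) (pr ε s⁻¹ s)) (!ε) z := by
    refine ⟨?_, ?_⟩
    · rw [act_apply, pr_not, rename_apply, swap_apply_right, hs.2, hso]
    · rw [Bool.not_not, act_apply, pr_self, rename_apply, swap_apply_right, hs.1, hso']
  refine ⟨?_, hstd⟩
  have hz1 : π ε z ≠ o := fun hh => hz ((π ε).injective (hh.trans hs.1.symm))
  have hz2 : π (!ε) z ≠ l := fun hh => hz ((π (!ε)).injective (hh.trans hs.2.symm))
  obtain ⟨i, hi⟩ := (c1_rot h).exists_zpow l h.2.2.1 (π ε z) (by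
    have : (π ε z : ℕ) ≠ o := fun hh => hz1 (Fin.ext hh)
    have := h.2.1
    omega)
  obtain ⟨j, hj⟩ := c2_zpow h (π (!ε) z) hz2
  have hρ := std_rot h π ε a hs i j
  set ρ := act π (pr ε ((s * swap o l) ^ i) ((swap o l * s) ^ j)) with hρdef
  have hρz : Std o l ρ (!ε) z := by
    refine ⟨?_, ?_⟩
    · rw [hρdef, act_apply, pr_not, hj]
    · rw [Bool.not_not, hρdef, act_apply, pr_self, hi]
  have hA := (std_rot h ρ (!ε) z hρz 1 (-1)).1
  have hB := (std_rot h _ (!ε) z hstd j i).1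
  refine hρ.1.trans (hA.trans ?_)
  have hsw : ∀ δ x, ρ δ (swap a z x) = swap o l (ρ δ x) := by
    intro δ x
    have h1 : swap (ρ δ a) (ρ δ z) = swap o l := by
      have e1 := hρ.2.1
      have e2 := hρ.2.2
      have e3 := hρz.1
      have e4 := hρz.2
      rw [Bool.not_not] at e4
      by_cases hd : δ = ε
      · rw [hd, e1, e4]
      · have : δ = !ε := by cases δ <;> cases ε <;> simp_all
        rw [this, e2, e3, swap_comm]
    rw [← h1, swap_apply_def, swap_apply_def]
    simp only [(ρ δ).injective.eq_iff]
    split_ifs <;> rfl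
  have key : act ρ (pr (!ε) ((s * swap o l) ^ (1 : ℤ)) ((swap o l * s) ^ (-1 : ℤ))) =
      act (act (pairRename π (swap a z)) (pr ε s⁻¹ s))
        (pr (!ε) ((s * swap o l) ^ j) ((swap o l * s) ^ i)) := by
    have e1 : act ρ (pr (!ε) ((s * swap o l) ^ (1 : ℤ)) ((swap o l * s) ^ (-1 : ℤ))) =
        act (pairRename ρ (swap a z)) (pr ε s⁻¹ s) := by
      apply pair_ext
      intro δ x
      rw [act_apply ρ, act_apply (pairRename ρ (swap a z)), rename_apply, hsw, pr_flip]
      simp only [pr]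
      split_ifs
      · simp [mul_inv_rev]
      · simp
    have e2 : pairRename ρ (swap a z) = act (pairRename π (swap a z))
      (pr ε ((s * swap o l) ^ i) ((swap o l * s) ^ j)) := rfl
    rw [e1, e2, act_mul, act_mul, pr_flip, pr_mul, pr_mul, conj_zpow']
    congr 2
    have e3 := conj_zpow' s (swap o l) j
    have : s * (swap o l * s) ^ j = s * ((swap o l * s) ^ j * s⁻¹) * s := by group
    rw [this, ← e3]; group
  rw [key]
  exact hB.symm

theorem std_three [DecidableEq A] (h : ShiftData s o l) (π : RPair A) (ε : Bool) (a z b : A)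
    (hs : Std o l π ε a) (hz : z ≠ a) (hb : b ≠ z) :
    Rch π (pairRename π (swap a z * swap z b)) := by
  have h1 := std_swap h π ε a z hs hz
  have h2 := std_swap h _ (!ε) z b h1.2 hb
  have h3 := (h1.1.trans h2.1).1
  have : act (pairRename (act (pairRename π (swap a z)) (pr ε s⁻¹ s)) (swap z b)) (pr (!ε) s⁻¹ s)
      = pairRename π (swap a z * swap z b) := by
    apply pair_ext
    intro δ x
    rw [pr_flip, act_apply, rename_apply, act_apply, rename_apply, rename_apply]
    simp only [pr]
    split_ifs <;> simp
  rwa [this] at h3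

end main

theorem alt_sub [DecidableEq A] (H : Submonoid (Perm A)) (a z₀ : A) (hz₀ : z₀ ≠ a)
    (hH : ∀ b z : A, b ≠ a → z ≠ a → swap a b * swap a z ∈ H) (σ : Perm A) :
    (Perm.sign σ = 1 → σ ∈ H) ∧ (Perm.sign σ = -1 → swap a z₀ * σ ∈ H) := by
  have conj : ∀ x y : A, x ≠ a → y ≠ a → x ≠ y → swap x y = swap a x * swap a y * swap a x := by
    intro x y hx hy hxy
    have := swap_mul_swap_mul_swap (x := y) (y := a) (z := x) hy (Ne.symm hxy)
    rw [← this, swap_comm y a]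

  have hl : ∀ x y : A, x ≠ y → swap a z₀ * swap x y ∈ H := by
    intro x y hxy
    by_cases hx : x = a
    · subst hx; exact hH _ _ hz₀ hxy.symm
    by_cases hy : y = a
    · subst hy; rw [swap_comm x]; exact hH _ _ hz₀ hxy
    have := H.mul_mem (hH z₀ x hz₀ hx) (hH y x hy hx)
    rw [conj x y hx hy hxy]
    simpa only [mul_assoc] using this
  have hr : ∀ x y : A, x ≠ y → swap x y * swap a z₀ ∈ H := by
    intro x y hxy
    by_cases hx : x = a
    · subst hx; exact hH _ _ hxy.symm hz₀
    by_cases hy : y = a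
    · subst hy; rw [swap_comm x]; exact hH _ _ hxy hz₀
    have := H.mul_mem (hH x y hx hy) (hH x z₀ hx hz₀)
    rw [conj x y hx hy hxy]
    simpa only [mul_assoc] using this
  induction σ using Perm.swap_induction_on with
  | one => exact ⟨fun _ => H.one_mem, fun h => by simp at h⟩
  | swap_mul f x y hxy ih =>
    rw [Perm.sign_mul, Perm.sign_swap hxy]
    refine ⟨fun h => ?_, fun h => ?_⟩
    · have := H.mul_mem (hr x y hxy) (ih.2 (by simpa [neg_eq_iff_eq_neg] using h))
      simpa [mul_assoc] using this
    · have := H.mul_mem (hl x y hxy) (ih.1 (by simpa using h))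
      simpa [mul_assoc] using this

/-- `Alt(A) ⊆ G(π)` for every irreducible pair `π`. -/
theorem stmt7 {A : Type*} [Fintype A] [DecidableEq A] [Nonempty A]
    (hN : 2 ≤ Fintype.card A) (π : RPair A) (hπ : PairIrreducible π) :
    (alternatingGroup A : Set (Equiv.Perm A)) ⊆ renamings π := by
  intro ν hν
  have hν1 : Perm.sign ν = 1 := by simpa using hν
  obtain ⟨ρ, hρ, ε, a, h1, h2⟩ := exists_std π hN (irr_of π hπ)
  obtain ⟨s, hs⟩ := exists_shift (Fintype.card A) hN
  have hd : ShiftData s (ρ ε a) (ρ (!ε) a) := ⟨hN, h1, h2, hs⟩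
  let H : Submonoid (Perm A) :=
    { carrier := {μ | Rch ρ (pairRename ρ μ)}
      one_mem' := Relation.ReflTransGen.refl
      mul_mem' := by
        intro x y hx hy
        exact Relation.ReflTransGen.trans hy (rch_rename y hx) }
  have : Nontrivial A := Fintype.one_lt_card_iff_nontrivial.mp (by omega)
  obtain ⟨z₀, hz₀⟩ := exists_ne a
  have hH : ∀ b z : A, b ≠ a → z ≠ a → swap a b * swap a z ∈ H := by
    intro b z hb hz
    by_cases hbz : b = z
    · subst hbz; rw [swap_mul_self]; exact H.one_mem
    · have := std_three hd ρ ε a z b ⟨rfl, rfl⟩ hz hbz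
      have e : swap a z * swap z b = swap a b * swap a z := by
        have := swap_mul_swap_mul_swap (x := b) (y := a) (z := z) hb hbz
        rw [← this, swap_comm b a]
        simp [mul_assoc]
      rw [e] at this
      exact this
  have hmem := (alt_sub H a z₀ hz₀ hH ν).1 hν1
  exact Relation.ReflTransGen.trans hρ.1 (Relation.ReflTransGen.trans hmem (rch_rename ν hρ.2))
end
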